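/- arXiv:2303.03022 — 4 statements merged into one kernel-verified Lean document; each statement's English description precedes it below -/
import Mathlib

section
/- Let X be a nonzero complex Banach space and T a bounded linear operator on X such that every λ ∈ ℂ with |λ| > 1 belongs to the resolvent set of T and ‖(λ−1)(λ−T)⁻¹‖ ≤ K for all such λ, where K ≥ 1. Then the spectrum of T is contained in a sector centred at 1, open to the left, of half-angle arctan(√(K²−1)): every z ∈ σ(T) satisfies Re z ≤ 1 and |Im z| ≤ √(K²−1)·(1 − Re z). -/
/-!
A point `z` of the spectrum and a point `l` of the resolvent set satisfy
`1 ≤ |l - z| * ‖R(l)‖` by the Neumann series, so the Ritt condition gives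
`|l - 1| ≤ K * |l - z|` whenever `|l| > 1`. On the line `l = 1 + i t` this says that a real
quadratic polynomial in `t` is nonnegative, and the sign of its discriminant is the inequality
`(Im z)² ≤ (K² - 1) * (1 - Re z)²`. The bound `Re z ≤ 1` holds because the spectrum lies in the
closed unit disc.
-/

/-- The resolvent is at least as large as the inverse distance to the spectrum. -/
lemma one_le_norm_sub_mul_norm_resolvent {A : Type*} [NormedRing A] [NormedAlgebra ℂ A]
    [CompleteSpace A] {a : A} {l z : ℂ} (hl : l ∈ resolventSet ℂ a) (hz : z ∈ spectrum ℂ a) :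
    1 ≤ ‖l - z‖ * ‖resolvent a l‖ := by
  by_contra! h
  rw [← norm_smul] at h
  apply hz
  have hu : IsUnit (1 - (l - z) • resolvent a l) := (Units.oneSub _ h).isUnit
  have hl' : IsUnit (algebraMap ℂ A l - a) := hl
  have hR : resolvent a l * (algebraMap ℂ A l - a) = 1 := Ring.inverse_mul_cancel _ hl'
  have key : (1 - (l - z) • resolvent a l) * (algebraMap ℂ A l - a) = algebraMap ℂ A z - a := by
    rw [sub_mul, smul_mul_assoc, hR, one_mul, sub_smul, Algebra.algebraMap_eq_smul_one,
      Algebra.algebraMap_eq_smul_one]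
    abel
  show IsUnit (algebraMap ℂ A z - a)
  rw [← key]
  exact hu.mul hl'

/-- The spectrum of a Ritt operator with constant `K ≥ 1` lies in a sector centred at `1`,
open to the left, of half-angle `arctan √(K²−1)`: every `z ∈ σ(T)` satisfies `Re z ≤ 1`
and `|Im z| ≤ √(K²−1)·(1 − Re z)`. -/
theorem stmt_2 {X : Type*} [NormedAddCommGroup X] [NormedSpace ℂ X] [CompleteSpace X]
    [Nontrivial X] (T : X →L[ℂ] X) (K : ℝ) (hK : 1 ≤ K)
    (hRitt : ∀ l : ℂ, 1 < ‖l‖ →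
      l ∈ resolventSet ℂ T ∧ ‖(l - 1) • resolvent T l‖ ≤ K) :
    ∀ z ∈ spectrum ℂ T, z.re ≤ 1 ∧ |z.im| ≤ Real.sqrt (K ^ 2 - 1) * (1 - z.re) := by
  intro z hz
  have hz1 : ‖z‖ ≤ 1 := by
    by_contra! h
    exact hz (hRitt z h).1
  have hre : z.re ≤ 1 := (Complex.re_le_norm z).trans hz1
  refine ⟨hre, ?_⟩
  have hbound (l : ℂ) (hl : 1 < ‖l‖) : ‖l - 1‖ ≤ K * ‖l - z‖ := by
    obtain ⟨hmem, hnorm⟩ := hRitt l hl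
    rw [norm_smul] at hnorm
    calc ‖l - 1‖ ≤ ‖l - 1‖ * (‖l - z‖ * ‖resolvent T l‖) :=
          le_mul_of_one_le_right (norm_nonneg _) (one_le_norm_sub_mul_norm_resolvent hmem hz)
      _ = ‖l - 1‖ * ‖resolvent T l‖ * ‖l - z‖ := by ring
      _ ≤ K * ‖l - z‖ := by gcongr
  have hquad (t : ℝ) : 0 ≤ (K ^ 2 - 1) * (t * t) + (-2 * K ^ 2 * z.im) * t
      + K ^ 2 * ((1 - z.re) ^ 2 + z.im ^ 2) := by
    -- The point `l = 1` is not outside the closed disc, but at `t = 0` the claim is trivial.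
    rcases eq_or_ne t 0 with rfl | ht
    · simp only [mul_zero, zero_add]
      positivity
    have ht2 : 0 < t ^ 2 := by positivity
    have hl : 1 < ‖(⟨1, t⟩ : ℂ)‖ := by
      rw [← one_lt_sq_iff₀ (norm_nonneg _), Complex.sq_norm, Complex.normSq_mk]
      linarith
    have h := pow_le_pow_left₀ (norm_nonneg _) (hbound _ hl) 2
    rw [mul_pow, Complex.sq_norm, Complex.sq_norm, Complex.normSq_apply,
      Complex.normSq_apply] at h
    simp only [Complex.sub_re, Complex.sub_im, Complex.one_re, Complex.one_im] at h
    linarith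
  have hdisc := discrim_le_zero hquad
  have hK2 : 0 < K ^ 2 := by positivity
  have hsq : z.im ^ 2 ≤ (K ^ 2 - 1) * (1 - z.re) ^ 2 := by
    rw [discrim] at hdisc
    refine le_of_mul_le_mul_left ?_ hK2
    linarith
  calc |z.im| ≤ √((K ^ 2 - 1) * (1 - z.re) ^ 2) := Real.abs_le_sqrt hsq
    _ = √(K ^ 2 - 1) * (1 - z.re) := by
      rw [Real.sqrt_mul (by nlinarith), Real.sqrt_sq (by linarith)]
end

section
/- Let X be a nonzero complex Banach space and T a bounded linear operator on X such that every λ ∈ ℂ with |λ| > 1 belongs to the resolvent set of T and ‖(λ−1)(λ−T)⁻¹‖ ≤ K for all such λ. Then there exists r ∈ (0,1) such that the spectrum σ(T) is contained in B_r, the convex hull of the singleton {1} and the closed ball of radius r centred at 0. -/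
/-!
For `z` in the spectrum of `T` and `1 < ‖l‖`, the Neumann series gives
`1 ≤ ‖resolvent T l‖ * ‖l - z‖` (`one_le_norm_resolvent_mul`), so the Ritt condition yields
`‖l - 1‖ ≤ K * ‖l - z‖`. Letting `l` tend radially to `z / ‖z‖` shows that `z` lies in the Stolz
domain `‖1 - z‖ ≤ C * (1 - ‖z‖)` with `C = |K| + 2` (`ritt_stolz`).

A Stolz domain is contained in some `B_r` (`stolz_subset_hull`): with `u = 1 - z`, the Stolz
inequality forces `‖u‖ / C ≤ Re u`, and then `z = t * 1 + (1 - t) * w` with `1 - t = C * ‖u‖` and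
`‖w‖ ^ 2 ≤ 1 - 1 / C ^ 2`, provided `C * ‖u‖ ≤ 1`. Otherwise `‖z‖ ≤ 1 - 1 / C ^ 2` already.
-/

/-- Lower bound on the resolvent by the inverse distance to the spectrum. -/
theorem one_le_norm_resolvent_mul {A : Type*} [NormedRing A] [NormedAlgebra ℂ A] [CompleteSpace A]
    [Nontrivial A] (a : A) (z l : ℂ) (hz : z ∈ spectrum ℂ a)
    (hl : l ∈ resolventSet ℂ a) (h1 : ‖(1 : A)‖ = 1) : 1 ≤ ‖resolvent a l‖ * ‖l - z‖ := by
  obtain ⟨x, hx⟩ := spectrum.mem_resolventSet_iff.mp hl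
  have hres : resolvent a l = ↑x⁻¹ := by rw [resolvent, ← hx, Ring.inverse_unit]
  by_contra! hlt
  apply hz
  have hpos : 0 < ‖(↑x⁻¹ : A)‖ := Units.norm_pos x⁻¹
  have hnear : ‖(algebraMap ℂ A z - a) - x‖ < ‖(↑x⁻¹ : A)‖⁻¹ := by
    have : (algebraMap ℂ A z - a) - x = algebraMap ℂ A (z - l) := by
      rw [hx, map_sub]; abel
    rw [this, norm_algebraMap, h1, mul_one, norm_sub_rev, ← one_div, lt_div_iff₀' hpos]
    rwa [hres] at hlt
  exact ⟨x.ofNearby _ hnear, rfl⟩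

/-- The spectrum of a Ritt operator lies in a Stolz domain with vertex `1`. -/
theorem ritt_stolz {X : Type*} [NormedAddCommGroup X] [NormedSpace ℂ X] [CompleteSpace X]
    [Nontrivial X] (T : X →L[ℂ] X) (K : ℝ)
    (hRitt : ∀ l : ℂ, 1 < ‖l‖ →
      l ∈ resolventSet ℂ T ∧ ‖(l - 1) • resolvent T l‖ ≤ K)
    (z : ℂ) (hz : z ∈ spectrum ℂ T) : ‖1 - z‖ ≤ (|K| + 2) * (1 - ‖z‖) := by
  have hC : 0 < |K| + 2 := by positivity
  have hz1 : ‖z‖ ≤ 1 := by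
    by_contra! h
    exact hz (hRitt z h).1
  have key : ∀ l : ℂ, 1 < ‖l‖ → ‖1 - z‖ ≤ (|K| + 2) * ‖l - z‖ := by
    intro l hl
    obtain ⟨hlr, hlK⟩ := hRitt l hl
    have hR := one_le_norm_resolvent_mul T z l hz hlr norm_one
    rw [norm_smul] at hlK
    have h1 : ‖l - 1‖ ≤ |K| * ‖l - z‖ := calc
      ‖l - 1‖ ≤ ‖l - 1‖ * (‖resolvent T l‖ * ‖l - z‖) := le_mul_of_one_le_right (norm_nonneg _) hR
      _ = (‖l - 1‖ * ‖resolvent T l‖) * ‖l - z‖ := by ring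
      _ ≤ |K| * ‖l - z‖ := by gcongr; exact hlK.trans (le_abs_self K)
    have h2 : ‖1 - z‖ ≤ ‖l - z‖ + ‖l - 1‖ := by
      simpa using norm_sub_le (l - z) (l - 1)
    linarith [norm_nonneg (l - z)]
  rcases eq_or_ne z 0 with rfl | h0
  · simp; linarith [abs_nonneg K]
  have hzpos : 0 < ‖z‖ := norm_pos_iff.mpr h0
  suffices h : ‖1 - z‖ / (|K| + 2) + ‖z‖ ≤ 1 by
    rw [← div_le_iff₀' hC]; linarith
  -- Test `key` at `l = s * (z / ‖z‖)` for every `s > 1`.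
  refine le_of_forall_gt_imp_ge_of_dense fun s hs => ?_
  have hnorm : ∀ c : ℝ, 0 ≤ c → ‖((c / ‖z‖ : ℝ) : ℂ) * z‖ = c := by
    intro c hc
    rw [norm_mul, Complex.norm_real, Real.norm_of_nonneg (by positivity)]
    field_simp
  have hk := key (((s / ‖z‖ : ℝ) : ℂ) * z) (by rw [hnorm s (by linarith)]; exact hs)
  have hd : ((s / ‖z‖ : ℝ) : ℂ) * z - z = (((s - ‖z‖) / ‖z‖ : ℝ) : ℂ) * z := by
    have : (‖z‖ : ℂ) ≠ 0 := by exact_mod_cast hzpos.ne'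
    push_cast
    field_simp
  rw [hd, hnorm _ (by linarith), ← div_le_iff₀' hC] at hk
  linarith

/-- A Stolz domain with vertex `1` lies in `B_r`. The radius `1 - 1 / (2 * C ^ 2)` is a rational
upper bound for `√(1 - 1 / C ^ 2)`. -/
theorem stolz_subset_hull (C : ℝ) (hC : 1 < C) (z : ℂ) (hz : ‖1 - z‖ ≤ C * (1 - ‖z‖)) :
    z ∈ convexHull ℝ ({1} ∪ Metric.closedBall (0 : ℂ) (1 - 1 / (2 * C ^ 2))) := by
  have hC0 : 0 < C := by linarith
  set a := ‖1 - z‖ with ha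
  set d := 1 / C with hd
  have hd0 : 0 < d := by positivity
  have hd1 : d < 1 := by rw [hd, div_lt_one hC0]; exact hC
  have hdC : C * d = 1 := by rw [hd]; field_simp
  have hr : 1 - 1 / (2 * C ^ 2) = 1 - d ^ 2 / 2 := by rw [hd]; field_simp
  have ha0 : 0 ≤ a := norm_nonneg _
  have hz' : ‖z‖ ≤ 1 - a * d := by
    have : a * d ≤ (C * (1 - ‖z‖)) * d := by gcongr
    nlinarith
  rw [hr]
  by_cases hs : C * a ≤ 1
  · rcases eq_or_lt_of_le ha0 with h0 | hapos
    · have : z = 1 := by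
        rw [ha, eq_comm, norm_eq_zero, sub_eq_zero] at h0
        exact h0.symm
      exact subset_convexHull ℝ _ (Or.inl this)
    set s := C * a with hsdef
    have hspos : 0 < s := by positivity
    have hsd : s * d = a := by rw [hsdef]; linear_combination a * hdC
    have hzsq : ‖z‖ ^ 2 = z.re ^ 2 + z.im ^ 2 := by
      rw [Complex.sq_norm, Complex.normSq_apply]; ring
    have hasq : a ^ 2 = (1 - z.re) ^ 2 + z.im ^ 2 := by
      rw [ha, Complex.sq_norm, Complex.normSq_apply]; simp; ring
    have hre : a * d ≤ 1 - z.re := by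
      have h1 : ‖z‖ ^ 2 ≤ (1 - a * d) ^ 2 := by gcongr
      nlinarith [mul_nonneg (sq_nonneg a) (by nlinarith : 0 ≤ 1 - d ^ 2)]
    have hball : ‖z - ((1 - s : ℝ) : ℂ)‖ ≤ s * (1 - d ^ 2 / 2) := by
      have hnn : 0 ≤ s * (1 - d ^ 2 / 2) := mul_nonneg hspos.le (by nlinarith)
      refine le_of_sq_le_sq ?_ hnn
      have e : ‖z - ((1 - s : ℝ) : ℂ)‖ ^ 2 = s ^ 2 - 2 * s * (1 - z.re) + a ^ 2 := by
        rw [hasq, Complex.sq_norm, Complex.normSq_apply]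
        simp; ring
      have h1 : s * (a * d) ≤ s * (1 - z.re) := by gcongr
      have h2 : s * (a * d) = a ^ 2 := by rw [← hsd]; ring
      have h3 : a ^ 2 = s ^ 2 * d ^ 2 := by rw [← hsd]; ring
      rw [e]
      nlinarith [sq_nonneg (s * d ^ 2)]
    have hsC : (s : ℂ) ≠ 0 := by exact_mod_cast hspos.ne'
    have hcomb : z = (1 - s) • (1 : ℂ) + s • ((z - ((1 - s : ℝ) : ℂ)) / s) := by
      simp only [Complex.real_smul]
      field_simp
      push_cast
      ring
    have hw : (z - ((1 - s : ℝ) : ℂ)) / s ∈ Metric.closedBall (0 : ℂ) (1 - d ^ 2 / 2) := by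
      rw [mem_closedBall_zero_iff, norm_div, Complex.norm_real, Real.norm_of_nonneg hspos.le,
        div_le_iff₀' hspos]
      exact hball
    have hmem1 := subset_convexHull ℝ ({1} ∪ Metric.closedBall (0 : ℂ) (1 - d ^ 2 / 2))
      (Set.mem_union_left _ (Set.mem_singleton (1 : ℂ)))
    have hmem2 := subset_convexHull ℝ ({1} ∪ Metric.closedBall (0 : ℂ) (1 - d ^ 2 / 2))
      (Set.mem_union_right _ hw)
    rw [hcomb]
    exact convex_convexHull ℝ _ hmem1 hmem2 (sub_nonneg.mpr hs) hspos.le (sub_add_cancel 1 s)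
  · refine subset_convexHull ℝ _ (Or.inr ?_)
    rw [mem_closedBall_zero_iff]
    have : d ≤ a := by
      by_contra! h
      exact hs (by nlinarith)
    nlinarith


/-- The spectrum of a Ritt operator is contained in `B_r`, the convex hull of `{1}` and the
closed ball of radius `r` centred at `0`, for some `r ∈ (0,1)`. -/
theorem stmt_3 {X : Type*} [NormedAddCommGroup X] [NormedSpace ℂ X] [CompleteSpace X]
    [Nontrivial X] (T : X →L[ℂ] X) (K : ℝ)
    (hRitt : ∀ l : ℂ, 1 < ‖l‖ →
      l ∈ resolventSet ℂ T ∧ ‖(l - 1) • resolvent T l‖ ≤ K) :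
    ∃ r ∈ Set.Ioo (0 : ℝ) 1,
      spectrum ℂ T ⊆ convexHull ℝ ({1} ∪ Metric.closedBall (0 : ℂ) r) := by
  have hC : 1 < |K| + 2 := by linarith [abs_nonneg K]
  refine ⟨1 - 1 / (2 * (|K| + 2) ^ 2), ⟨?_, ?_⟩, fun z hz =>
    stolz_subset_hull _ hC z (ritt_stolz T K hRitt z hz)⟩
  · rw [sub_pos, div_lt_one (by positivity)]
    nlinarith
  · have : 0 < 1 / (2 * (|K| + 2) ^ 2) := by positivity
    linarith
end

section
/- Let X be a nonzero complex Banach space and T a bounded linear operator on X such that every λ ∈ ℂ with |λ| > 1 belongs to the resolvent set of T and ‖(λ−1)(λ−T)⁻¹‖ ≤ K for all such λ. Then every point z₀ of the unit circle with z₀ ≠ 1 lies in the resolvent set of T; in particular the operators Id + T and Id + T + T² are invertible in B(X). -/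
/-!
The resolvent at `l` controls a disc: `z` is in the resolvent set as soon as
`‖z - l‖ * ‖(l - T)⁻¹‖ < 1`. For `z₀` on the unit circle with `d = ‖z₀ - 1‖ > 0`, take
`l = (1 + ε) z₀`. Then `‖z₀ - l‖ = ε`, while the Ritt bound gives
`‖(l - T)⁻¹‖ ≤ K / ‖l - 1‖ ≤ K / (d - ε)`, so every `ε` with `ε (K + 1) < d` works.

The two invertibility claims follow from the factorizations `1 + T = -(-1 - T)` and
`1 + T + T² = (ω - T) (ω² - T)`, with `ω` a primitive cube root of unity.
-/

/-- Neumann series: the resolvent set contains the disc of radius `‖(l - T)⁻¹‖⁻¹` around `l`. -/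
lemma mem_resolventSet_of_norm_mul_lt {A : Type*} [NormedRing A] [NormedAlgebra ℂ A]
    [NormOneClass A] [CompleteSpace A] {T : A} {l z : ℂ} (hl : l ∈ resolventSet ℂ T)
    (h : ‖z - l‖ * ‖resolvent T l‖ < 1) : z ∈ resolventSet ℂ T := by
  have : Nontrivial A := NormOneClass.nontrivial
  rw [spectrum.resolvent_eq hl] at h
  have hpos : 0 < ‖(↑(hl.unit⁻¹) : A)‖ := norm_pos_iff.2 (Units.ne_zero _)
  refine (Units.ofNearby hl.unit (algebraMap ℂ A z - T) ?_).isUnit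
  have hsub : algebraMap ℂ A z - T - (hl.unit : A) = algebraMap ℂ A (z - l) := by
    have hunit : (hl.unit : A) = algebraMap ℂ A l - T := rfl
    rw [hunit, map_sub]
    abel
  rw [hsub, norm_algebraMap']
  rwa [← one_div, lt_div_iff₀ hpos]

theorem mem_resolventSet_of_ritt {A : Type*} [NormedRing A] [NormedAlgebra ℂ A]
    [NormOneClass A] [CompleteSpace A] {T : A} {K : ℝ}
    (hRitt : ∀ l : ℂ, 1 < ‖l‖ →
      l ∈ resolventSet ℂ T ∧ ‖(l - 1) • resolvent T l‖ ≤ K)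
    {z : ℂ} (hz : ‖z‖ = 1) (hz1 : z ≠ 1) : z ∈ resolventSet ℂ T := by
  have hK : 0 ≤ K := (norm_nonneg _).trans (hRitt 2 (by norm_num)).2
  have hd : 0 < ‖z - 1‖ := norm_pos_iff.2 (sub_ne_zero.2 hz1)
  obtain ⟨ε, hε, hεK⟩ : ∃ ε : ℝ, 0 < ε ∧ ε * (K + 2) = ‖z - 1‖ :=
    ⟨‖z - 1‖ / (K + 2), by positivity, by field_simp⟩
  set l : ℂ := ((1 + ε : ℝ) : ℂ) * z with hldef
  have hl : ‖l‖ = 1 + ε := by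
    rw [hldef, norm_mul, hz, mul_one, Complex.norm_real, Real.norm_of_nonneg (by positivity)]
  have hzl : ‖z - l‖ = ε := by
    have : z - l = -((ε : ℂ) * z) := by rw [hldef]; push_cast; ring
    rw [this, norm_neg, norm_mul, hz, mul_one, Complex.norm_real, Real.norm_of_nonneg hε.le]
  obtain ⟨hmem, hbound⟩ := hRitt l (by linarith)
  have htri : ‖z - 1‖ ≤ ‖z - l‖ + ‖l - 1‖ := norm_sub_le_norm_sub_add_norm_sub z l 1
  rw [norm_smul] at hbound
  have hl1 : ε * (K + 1) ≤ ‖l - 1‖ := by linarith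
  refine mem_resolventSet_of_norm_mul_lt hmem ?_
  rw [hzl]
  -- `ε (K + 1) ‖R‖ ≤ ‖l - 1‖ ‖R‖ ≤ K`, so `ε ‖R‖ ≤ K / (K + 1) < 1`
  have h1 := (mul_le_mul_of_nonneg_right hl1 (norm_nonneg (resolvent T l))).trans hbound
  by_contra! hge
  nlinarith

/-- Every point of the unit circle other than `1` lies in the resolvent set of a Ritt
operator; in particular `Id + T` and `Id + T + T²` are invertible in `B(X)`. -/
theorem stmt_4 {X : Type*} [NormedAddCommGroup X] [NormedSpace ℂ X] [CompleteSpace X]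
    [Nontrivial X] (T : X →L[ℂ] X) (K : ℝ)
    (hRitt : ∀ l : ℂ, 1 < ‖l‖ →
      l ∈ resolventSet ℂ T ∧ ‖(l - 1) • resolvent T l‖ ≤ K) :
    (∀ z₀ : ℂ, ‖z₀‖ = 1 → z₀ ≠ 1 → z₀ ∈ resolventSet ℂ T) ∧
    IsUnit (1 + T) ∧ IsUnit (1 + T + T ^ 2) := by
  have key : ∀ z₀ : ℂ, ‖z₀‖ = 1 → z₀ ≠ 1 → z₀ ∈ resolventSet ℂ T :=
    fun z hz hz1 => mem_resolventSet_of_ritt hRitt hz hz1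
  refine ⟨key, ?_, ?_⟩
  · have h : IsUnit (algebraMap ℂ (X →L[ℂ] X) (-1) - T) := key (-1) (by simp) (by norm_num)
    have h2 : 1 + T = -(algebraMap ℂ (X →L[ℂ] X) (-1) - T) := by
      rw [map_neg, map_one]
      abel
    rw [h2]
    exact h.neg
  · obtain ⟨w, hw⟩ : ∃ w : ℂ, IsPrimitiveRoot w 3 :=
      ⟨_, Complex.isPrimitiveRoot_exp 3 (by norm_num)⟩
    have hn : ‖w‖ = 1 := hw.norm'_eq_one (by norm_num)
    have hw1 : w ≠ 1 := hw.ne_one (by norm_num)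
    have hw3 : w ^ 3 = 1 := hw.pow_eq_one
    have hw2 : w ^ 2 ≠ 1 := hw.pow_ne_one_of_pos_of_lt (by norm_num) (by norm_num)
    have hsum : w + w ^ 2 = -1 := by
      refine mul_left_cancel₀ (sub_ne_zero.2 hw1) ?_
      linear_combination hw3
    have h : IsUnit (algebraMap ℂ (X →L[ℂ] X) w - T) := key w hn hw1
    have h' : IsUnit (algebraMap ℂ (X →L[ℂ] X) (w ^ 2) - T) :=
      key (w ^ 2) (by rw [norm_pow, hn, one_pow]) hw2
    have hfac : 1 + T + T ^ 2 =
        (algebraMap ℂ (X →L[ℂ] X) w - T) * (algebraMap ℂ (X →L[ℂ] X) (w ^ 2) - T) := by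
      have e1 : algebraMap ℂ (X →L[ℂ] X) w * algebraMap ℂ (X →L[ℂ] X) (w ^ 2) = 1 := by
        rw [← map_mul, ← pow_succ', hw3, map_one]
      have e2 : algebraMap ℂ (X →L[ℂ] X) w * T + algebraMap ℂ (X →L[ℂ] X) (w ^ 2) * T = -T := by
        rw [← add_mul, ← map_add, hsum, map_neg, map_one, neg_one_mul]
      have e3 : 1 + T + T ^ 2 = 1 - -T + T * T := by rw [sq, sub_neg_eq_add]
      rw [e3, ← e2, sub_mul, mul_sub, mul_sub, e1, ← Algebra.commutes (w ^ 2) T]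
      abel
    rw [hfac]
    exact h.mul h'
end

section
/- Let X be a nonzero complex Banach space and T a bounded linear operator on X. Then T is a Ritt operator (i.e. every λ with |λ| > 1 is in the resolvent set of T and sup_{|λ|>1} ‖(λ−1)(λ−T)⁻¹‖ < ∞) if and only if the following two conditions hold simultaneously: (PB) there is C₁ > 0 with ‖Tⁿ‖ ≤ C₁ for all n ≥ 0 (power-boundedness), and (DD) there is C₂ > 0 with ‖k·T^{k−1}(Id − T)‖ ≤ C₂ for all k ≥ 1 (the discrete derivative condition). -/
/-!
Both implications hold for an element `T` of a unital complex Banach algebra.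

*Ritt implies (PB) and (DD).*  With `z = 1/λ`, the Ritt condition reads
`‖(1 - z)(1 - zT)⁻¹‖ ≤ K` for `0 < |z| < 1`.  The functions
`(1 - zT)⁻² = ∑ (n + 1) zⁿ Tⁿ` and `(1 - zT)⁻³ (1 - T) = ∑ C(n + 2, 2) zⁿ Tⁿ (1 - T)` are
therefore both `O(|1 - z|⁻²)` for `1/2 ≤ |z| < 1`; for the second one this uses
`z (1 - T) (1 - zT)⁻¹ = 1 - (1 - z)(1 - zT)⁻¹`.  Since the mean of `|1 - z|⁻²` over `|z| = r` is
`1 / (1 - r²)` (`integral_poisson`), the `L¹` Cauchy estimate on the circle of radius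
`r = 1 - 1/(n + 2)` bounds their `n`-th Taylor coefficients by `O(n)` (`coeff_bound`).  Dividing by
`n + 1` and by `C(n + 2, 2)` gives the two claims.  Passing to powers of the resolvent plays the
role of integrating by parts in the Dunford integral and makes it unnecessary to push the contour
inside the unit disc.

*(PB) and (DD) imply Ritt.*  If `λ` is in the spectrum, then `|λ|ⁿ ≤ ‖Tⁿ‖ ≤ C₁` for all `n`, so
`|λ| ≤ 1`.  For `|λ| > 1` and `R = (λ - T)⁻¹`, expanding `N` terms of the Neumann series gives
`(λ - 1) R = (λ - 1) ∑_{n < N} λ⁻ⁿ⁻¹ Tⁿ + λ⁻ᴺ Tᴺ - λ⁻ᴺ Tᴺ (1 - T) R`, whence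
`‖(λ - 1) R‖ ≤ N |λ - 1| C₁ + C₁ + C₂ / (N + 1) ‖R‖`.  For `N = ⌊2 C₂ / |λ - 1|⌋` the last term is at
most half of the left-hand side and can be absorbed.
-/

open Filter Topology

/-- The mean of `|1 - z|⁻²` over the circle `|z| = r`: up to the factor `1 - r²`, this is the total mass
of the Poisson kernel. -/
lemma integral_poisson {r : ℝ} (hr0 : 0 ≤ r) (hr : r < 1) :
    (2 * Real.pi)⁻¹ * ∫ θ : ℝ in 0..2 * Real.pi, (‖1 - circleMap 0 r θ‖ ^ 2)⁻¹
      = (1 - r ^ 2)⁻¹ := by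
  have hf : DiffContOnCl ℂ (fun _ : ℂ => (1 : ℂ)) (Metric.ball 0 1) := diffContOnCl_const
  have hw : (r : ℂ) ∈ Metric.ball (0 : ℂ) 1 := by simpa [abs_of_nonneg hr0] using hr
  have h := hf.circleAverage_poissonKernel_smul hw
  have h1 : (poissonKernel 0 (r : ℂ) • fun _ : ℂ => (1 : ℂ)) =
      fun z => ((poissonKernel 0 (r : ℂ) z : ℝ) : ℂ) := by
    ext z; simp
  have hpos : 0 < 1 - r ^ 2 := by nlinarith
  rw [h1, Real.circleAverage_def] at h
  rw [intervalIntegral.integral_ofReal] at h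
  have h2 : ∀ θ : ℝ, poissonKernel 0 (r : ℂ) (circleMap 0 1 θ)
      = (1 - r ^ 2) * (‖1 - circleMap 0 r θ‖ ^ 2)⁻¹ := by
    intro θ
    -- `|e^{iθ} - r| = |1 - r e^{iθ}|`: conjugate and multiply by `e^{iθ}`
    have h3 : ‖circleMap 0 1 θ - (r : ℂ)‖ ^ 2 = ‖1 - circleMap 0 r θ‖ ^ 2 := by
      rw [← Complex.normSq_eq_norm_sq, ← Complex.normSq_eq_norm_sq]
      have := Real.sin_sq_add_cos_sq θ
      simp only [circleMap_zero, Complex.normSq_apply, Complex.exp_mul_I, ← Complex.ofReal_cos,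
        ← Complex.ofReal_sin]
      simp [-Complex.ofReal_cos, -Complex.ofReal_sin]
      linear_combination (1 - r ^ 2) * this
    rw [poissonKernel_def]
    simp only [sub_zero, h3]
    simp [abs_of_nonneg hr0, div_eq_mul_inv]
  simp only [h2, intervalIntegral.integral_const_mul] at h
  rw [Complex.real_smul, ← Complex.ofReal_mul] at h
  have h4 := Complex.ofReal_eq_one.mp h
  field_simp at h4 ⊢
  linarith

section BanachAlgebra

variable {A : Type*} [NormedRing A] [NormedAlgebra ℂ A]

/-- The Ritt condition in the variable `z = 1/λ`. -/
lemma ritt_inverse (T : A) {K : ℝ} (hres : ∀ l : ℂ, 1 < ‖l‖ → l ∈ resolventSet ℂ T)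
    (hK : ∀ l : ℂ, 1 < ‖l‖ → ‖(l - 1) • resolvent T l‖ ≤ K) {z : ℂ} (hz0 : z ≠ 0)
    (hz : ‖z‖ < 1) :
    IsUnit (1 - z • T) ∧ ‖(1 - z) • Ring.inverse (1 - z • T)‖ ≤ K := by
  have hl : 1 < ‖z⁻¹‖ := by
    rw [norm_inv]; exact (one_lt_inv₀ (norm_pos_iff.mpr hz0)).mpr hz
  have hu : IsUnit (algebraMap ℂ A z⁻¹ - T) := hres _ hl
  have hfac : 1 - z • T = algebraMap ℂ A z * (algebraMap ℂ A z⁻¹ - T) := by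
    rw [mul_sub, ← map_mul, mul_inv_cancel₀ hz0, map_one, Algebra.smul_def]
  have huz : IsUnit (algebraMap ℂ A z) := (IsUnit.mk0 z hz0).map (algebraMap ℂ A)
  refine ⟨hfac ▸ huz.mul hu, ?_⟩
  have hinv : Ring.inverse (algebraMap ℂ A z) = algebraMap ℂ A z⁻¹ := by
    have h := Ring.inverse_mul_eq_iff_eq_mul (algebraMap ℂ A z) 1 (algebraMap ℂ A z⁻¹) huz
    rw [mul_one] at h
    rw [h, ← map_mul, mul_inv_cancel₀ hz0, map_one]
  rw [hfac, Ring.inverse_mul (Or.inl huz), hinv, ← Algebra.commutes, ← Algebra.smul_def, smul_smul]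
  have : (1 - z) * z⁻¹ = z⁻¹ - 1 := by field_simp
  rw [this]
  exact hK _ hl

variable [CompleteSpace A]

/-- The `L¹` Cauchy estimate for the Taylor coefficients of `(1 - zT)⁻ᵏ⁻¹ B`, assuming a bound by
`M |1 - z|⁻²` near the unit circle. -/
lemma coeff_bound (T B : A) (k : ℕ) (M : ℝ)
    (hu : ∀ z : ℂ, ‖z‖ < 1 → IsUnit (1 - z • T))
    (hM : ∀ z : ℂ, 1 / 2 ≤ ‖z‖ → ‖z‖ < 1 →
      ‖Ring.inverse (1 - z • T) ^ (k + 1) * B‖ ≤ M * (‖1 - z‖ ^ 2)⁻¹) (n : ℕ) :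
    ((n + k).choose k : ℝ) * ‖T ^ n * B‖ ≤ Real.exp 1 * M * (n + 2) := by
  set F : ℂ → A := fun z => Ring.inverse (1 - z • T) ^ (k + 1) * B with hF
  -- the radius is `1 - 1/(n+2)`, so that `1/(1-r) = n+2` while `r⁻ⁿ ≤ e`
  set r : ℝ := (n + 1) / (n + 2) with hr
  have hr1 : r < 1 := by rw [hr, div_lt_one (by positivity)]; linarith
  have hr2 : 1 / 2 ≤ r := by
    rw [hr, div_le_div_iff₀ (by norm_num) (by positivity)]
    have : (0 : ℝ) ≤ n := Nat.cast_nonneg n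
    linarith
  have hr0 : 0 < r := by linarith
  have hM0 : 0 ≤ M := by
    have h := (norm_nonneg _).trans
      (hM (r : ℂ) (by simpa [abs_of_pos hr0] using hr2) (by simpa [abs_of_pos hr0] using hr1))
    have h1 : 0 < (‖1 - (r : ℂ)‖ ^ 2)⁻¹ := by
      have : (1 : ℂ) - r ≠ 0 := by
        rw [sub_ne_zero]; exact_mod_cast hr1.ne'
      positivity
    exact nonneg_of_mul_nonneg_left h h1
  have hd : DifferentiableOn ℂ F (Metric.ball 0 1) := by
    intro z hz
    have hz' : ‖z‖ < 1 := by simpa using hz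
    have h1 : DifferentiableAt ℂ (fun z : ℂ => Ring.inverse (1 - z • T)) z :=
      DifferentiableAt.comp (g := Ring.inverse) (f := fun z : ℂ => 1 - z • T) z
        (differentiableAt_inverse (hu z hz')) (by fun_prop)
    exact ((h1.pow (k + 1)).mul_const B).differentiableWithinAt
  have hps : HasFPowerSeriesAt F (cauchyPowerSeries F 0 r) 0 := by
    have hd' : DifferentiableOn ℂ F (Metric.closedBall 0 ((⟨r, hr0.le⟩ : NNReal) : ℝ)) :=
      hd.mono (Metric.closedBall_subset_ball hr1)
    have h := hd'.hasFPowerSeriesOnBall (R := ⟨r, hr0.le⟩) hr0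
    exact h.hasFPowerSeriesAt
  set p : FormalMultilinearSeries ℂ ℂ A := fun n =>
    ContinuousMultilinearMap.mkPiRing ℂ (Fin n) (((n + k).choose k : ℂ) • (T ^ n * B)) with hp
  have hps' : HasFPowerSeriesAt F p 0 := by
    rw [hasFPowerSeriesAt_iff]
    have hc : Tendsto (fun z : ℂ => ‖z • T‖) (𝓝 0) (𝓝 0) := by
      have : Continuous (fun z : ℂ => ‖z • T‖) := by fun_prop
      simpa using this.tendsto 0
    filter_upwards [hc.eventually (gt_mem_nhds one_pos)] with z hz
    have h := (hasSum_choose_mul_geometric_of_norm_lt_one' k hz).mul_right B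
    rw [zero_add]
    have hcoeff : ∀ m : ℕ, z ^ m • p.coeff m = ((m + k).choose k : A) * (z • T) ^ m * B := by
      intro m
      have hm : p.coeff m = ((m + k).choose k : ℂ) • (T ^ m * B) := by
        change (ContinuousMultilinearMap.mkPiRing ℂ (Fin m) _) 1 = _
        simp
      rw [hm, smul_pow, mul_smul_comm, smul_mul_assoc, ← nsmul_eq_mul, smul_mul_assoc,
        Nat.cast_smul_eq_nsmul ℂ]
    simpa only [hcoeff] using h
  have heq := hps'.eq_formalMultilinearSeries hps
  have h1 := norm_cauchyPowerSeries_le F 0 r n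
  rw [← heq] at h1
  have h2 : ‖p n‖ = ((n + k).choose k : ℝ) * ‖T ^ n * B‖ := by
    simp [hp, norm_smul]
  rw [h2, abs_of_pos hr0] at h1
  have hne : ∀ θ : ℝ, ‖1 - circleMap 0 r θ‖ ^ 2 ≠ 0 := by
    intro θ h0
    have h0' : (1 : ℂ) = circleMap 0 r θ := by
      simpa [sub_eq_zero] using h0
    have := congrArg norm h0'
    simp [abs_of_pos hr0] at this
    linarith
  have h3 : ∫ θ : ℝ in 0..2 * Real.pi, ‖F (circleMap 0 r θ)‖ ≤
      ∫ θ : ℝ in 0..2 * Real.pi, M * (‖1 - circleMap 0 r θ‖ ^ 2)⁻¹ := by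
    apply intervalIntegral.integral_mono_on Real.two_pi_pos.le
    · apply Continuous.intervalIntegrable
      apply Continuous.norm
      exact hd.continuousOn.comp_continuous (continuous_circleMap 0 r)
        (fun θ => by simpa [abs_of_pos hr0] using hr1)
    · apply Continuous.intervalIntegrable
      exact continuous_const.mul
        (((continuous_const.sub (continuous_circleMap 0 r)).norm.pow 2).inv₀ hne)
    · intro θ _
      exact hM _ (by simpa [abs_of_pos hr0] using hr2) (by simpa [abs_of_pos hr0] using hr1)
  rw [intervalIntegral.integral_const_mul] at h3
  have h4 : (2 * Real.pi)⁻¹ * ∫ θ : ℝ in 0..2 * Real.pi, ‖F (circleMap 0 r θ)‖ ≤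
      M * (n + 2) := by
    calc _ ≤ (2 * Real.pi)⁻¹ *
          (M * ∫ θ : ℝ in 0..2 * Real.pi, (‖1 - circleMap 0 r θ‖ ^ 2)⁻¹) := by gcongr
      _ = M * (1 - r ^ 2)⁻¹ := by rw [← integral_poisson hr0.le hr1]; ring
      _ ≤ M * (n + 2) := by
        gcongr
        have h5 : ((n : ℝ) + 2)⁻¹ ≤ 1 - r ^ 2 := by
          have : ((n : ℝ) + 2)⁻¹ = 1 - r := by rw [hr]; field_simp; ring
          rw [this]; nlinarith
        exact inv_le_of_inv_le₀ (by positivity) h5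
  have h6 : r⁻¹ ^ n ≤ Real.exp 1 := by
    have h7 : r⁻¹ = ((n : ℝ) + 1)⁻¹ + 1 := by rw [hr]; field_simp; ring
    calc r⁻¹ ^ n ≤ (Real.exp ((n : ℝ) + 1)⁻¹) ^ n := by
          rw [h7]; gcongr; exact Real.add_one_le_exp _
      _ = Real.exp (n * ((n : ℝ) + 1)⁻¹) := by rw [Real.exp_nat_mul]
      _ ≤ Real.exp 1 := by
        apply Real.exp_le_exp.mpr
        rw [← div_eq_mul_inv, div_le_one (by positivity)]; linarith
  calc _ ≤ _ := h1
    _ ≤ (M * (n + 2)) * Real.exp 1 := by gcongr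
    _ = _ := by ring

lemma ritt_forward (T : A) {K : ℝ} (hres : ∀ l : ℂ, 1 < ‖l‖ → l ∈ resolventSet ℂ T)
    (hK : ∀ l : ℂ, 1 < ‖l‖ → ‖(l - 1) • resolvent T l‖ ≤ K) :
    (∃ C₁ : ℝ, 0 < C₁ ∧ ∀ n : ℕ, ‖T ^ n‖ ≤ C₁) ∧
      ∃ C₂ : ℝ, 0 < C₂ ∧ ∀ k : ℕ, 1 ≤ k → ‖(k : ℂ) • (T ^ (k - 1) * (1 - T))‖ ≤ C₂ := by
  have hK0 : 0 ≤ K := (norm_nonneg _).trans (hK 2 (by norm_num))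
  have hu : ∀ z : ℂ, ‖z‖ < 1 → IsUnit (1 - z • T) := by
    intro z hz
    rcases eq_or_ne z 0 with rfl | hz0
    · simp
    · exact (ritt_inverse T hres hK hz0 hz).1
  have hb : ∀ z : ℂ, 1 / 2 ≤ ‖z‖ → ‖z‖ < 1 → z ≠ 0 ∧ 0 < ‖1 - z‖ ∧
      ‖Ring.inverse (1 - z • T)‖ ≤ K * ‖1 - z‖⁻¹ := by
    intro z hz2 hz
    have hz0 : z ≠ 0 := by
      rintro rfl; norm_num at hz2
    have h1 : 0 < ‖1 - z‖ := by
      rw [norm_pos_iff, sub_ne_zero]; rintro rfl; simp at hz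
    refine ⟨hz0, h1, ?_⟩
    have h := (ritt_inverse T hres hK hz0 hz).2
    rw [norm_smul] at h
    rw [← div_eq_mul_inv, le_div_iff₀ h1]; linarith
  constructor
  · refine ⟨2 * Real.exp 1 * K ^ 2 + 1, by positivity, fun n => ?_⟩
    have h := coeff_bound T 1 1 (K ^ 2) hu (fun z hz2 hz => by
      obtain ⟨-, h1, h2⟩ := hb z hz2 hz
      rw [mul_one]
      calc _ ≤ ‖Ring.inverse (1 - z • T)‖ ^ (1 + 1) := norm_pow_le' _ (by norm_num)
        _ ≤ (K * ‖1 - z‖⁻¹) ^ 2 := by gcongr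
        _ = _ := by rw [mul_pow, inv_pow]) n
    simp only [mul_one, Nat.choose_one_right] at h
    push_cast at h
    have h3 : Real.exp 1 * K ^ 2 * (n + 2) ≤ (n + 1) * (2 * Real.exp 1 * K ^ 2) := by
      have : 0 ≤ Real.exp 1 * K ^ 2 := by positivity
      have hn : (0 : ℝ) ≤ n := Nat.cast_nonneg n
      nlinarith [mul_nonneg this hn]
    have h4 : ‖T ^ n‖ ≤ 2 * Real.exp 1 * K ^ 2 :=
      le_of_mul_le_mul_left (h.trans h3) (by positivity)
    linarith
  · set D : ℝ := 2 * (‖(1 : A)‖ + K) with hD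
    have hD0 : 0 ≤ D := by positivity
    refine ⟨2 * Real.exp 1 * (K ^ 2 * D) + 1, by positivity, fun k hk => ?_⟩
    obtain ⟨n, rfl⟩ : ∃ n, k = n + 1 := ⟨k - 1, by omega⟩
    have h := coeff_bound T (1 - T) 2 (K ^ 2 * D) hu (fun z hz2 hz => by
      obtain ⟨hz0, h1, h2⟩ := hb z hz2 hz
      have h3 : z • (Ring.inverse (1 - z • T) * (1 - T))
          = 1 - (1 - z) • Ring.inverse (1 - z • T) := by
        have h4 := Ring.inverse_mul_cancel _ (hu z hz)
        rw [mul_sub, mul_smul_comm, mul_one] at h4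
        generalize Ring.inverse (1 - z • T) = S at h4 ⊢
        rw [mul_sub, smul_sub, mul_one, sub_smul, one_smul, ← h4]
        abel
      have h5 : ‖Ring.inverse (1 - z • T) * (1 - T)‖ ≤ D := by
        have h6 : ‖z‖ * ‖Ring.inverse (1 - z • T) * (1 - T)‖ ≤ ‖(1 : A)‖ + K := by
          rw [← norm_smul, h3]
          exact (norm_sub_le _ _).trans
            (add_le_add le_rfl (ritt_inverse T hres hK hz0 hz).2)
        have := norm_nonneg (Ring.inverse (1 - z • T) * (1 - T))
        rw [hD]; nlinarith
      calc _ = ‖Ring.inverse (1 - z • T) ^ 2 * (Ring.inverse (1 - z • T) * (1 - T))‖ := by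
            rw [pow_succ _ 2, mul_assoc]
        _ ≤ ‖Ring.inverse (1 - z • T)‖ ^ 2 * ‖Ring.inverse (1 - z • T) * (1 - T)‖ := by
            refine (norm_mul_le _ _).trans ?_
            gcongr
            exact norm_pow_le' _ (by norm_num)
        _ ≤ (K * ‖1 - z‖⁻¹) ^ 2 * D := by gcongr
        _ = _ := by rw [mul_pow, inv_pow]; ring) n
    have hch : ((n + 2).choose 2 : ℝ) = (n + 2) * (n + 1) / 2 := by
      rw [Nat.cast_choose_two]; push_cast; ring
    rw [hch] at h
    rw [norm_smul, Complex.norm_natCast, Nat.add_sub_cancel]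
    push_cast
    have h7 : ((n : ℝ) + 2) * (((n : ℝ) + 1) * ‖T ^ n * (1 - T)‖) ≤
        (n + 2) * (2 * Real.exp 1 * (K ^ 2 * D)) := by linarith
    have h8 := le_of_mul_le_mul_left h7 (by positivity)
    linarith

/-- A power-bounded element has no spectrum outside the closed unit disc. -/
lemma mem_resolventSet_of_powerBounded (T : A) {C₁ : ℝ} (h1 : ∀ n : ℕ, ‖T ^ n‖ ≤ C₁)
    {l : ℂ} (hl : 1 < ‖l‖) : l ∈ resolventSet ℂ T := by
  by_contra hns
  have hs : l ∈ spectrum ℂ T := hns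
  obtain ⟨n, hn⟩ := pow_unbounded_of_one_lt (C₁ * ‖(1 : A)‖) hl
  have h2 := spectrum.norm_le_norm_mul_of_mem (spectrum.pow_mem_pow T n hs)
  rw [norm_pow] at h2
  have h3 := mul_le_mul_of_nonneg_right (h1 n) (norm_nonneg (1 : A))
  linarith

lemma ritt_backward (T : A) {C₁ C₂ : ℝ} (hC₁ : 0 < C₁) (h1 : ∀ n : ℕ, ‖T ^ n‖ ≤ C₁)
    (hC₂ : 0 < C₂) (h2 : ∀ k : ℕ, 1 ≤ k → ‖(k : ℂ) • (T ^ (k - 1) * (1 - T))‖ ≤ C₂)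
    {l : ℂ} (hl : 1 < ‖l‖) : ‖(l - 1) • resolvent T l‖ ≤ 2 * (2 * C₂ * C₁ + C₁) := by
  have hl0 : l ≠ 0 := by rintro rfl; norm_num at hl
  have hd : 0 < ‖l - 1‖ := by
    rw [norm_pos_iff, sub_ne_zero]; rintro rfl; norm_num at hl
  have hu : IsUnit (algebraMap ℂ A l - T) := mem_resolventSet_of_powerBounded T h1 hl
  set R := resolvent T l with hR
  have hRl : l • R = 1 + T * R := by
    have h := Ring.mul_inverse_cancel _ hu
    change (algebraMap ℂ A l - T) * R = 1 at h
    rw [sub_mul, ← Algebra.smul_def] at h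
    rw [← h]; abel
  have hli : ∀ n : ℕ, ‖l⁻¹ ^ n‖ ≤ 1 := fun n => by
    rw [norm_pow, norm_inv]
    exact pow_le_one₀ (by positivity) (inv_le_one_of_one_le₀ hl.le)
  have hexp : ∀ N : ℕ, R = ∑ n ∈ Finset.range N, l⁻¹ ^ (n + 1) • T ^ n
      + l⁻¹ ^ N • (T ^ N * R) := by
    intro N
    induction N with
    | zero => simp
    | succ N ih =>
      have h3 : T ^ N * R = l⁻¹ • (T ^ N + T ^ (N + 1) * R) := by
        rw [pow_succ, mul_assoc, eq_inv_smul_iff₀ hl0, ← mul_smul_comm, hRl, mul_add, mul_one]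
      rw [Finset.sum_range_succ, add_assoc, ← smul_add, pow_succ, mul_smul, ← h3]
      exact ih
  have hR1 : (l - 1) • R = 1 - (1 - T) * R := by
    rw [sub_smul, one_smul, hRl, sub_mul, one_mul]; abel
  set N := ⌊2 * C₂ / ‖l - 1‖⌋₊ with hN
  have hN1 : (N : ℝ) * ‖l - 1‖ ≤ 2 * C₂ := by
    rw [← le_div_iff₀ hd]; exact Nat.floor_le (by positivity)
  have hN2 : 2 * C₂ ≤ ((N : ℝ) + 1) * ‖l - 1‖ := by
    rw [← div_le_iff₀ hd]; exact (Nat.lt_floor_add_one _).le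
  have hkey : (l - 1) • R = (l - 1) • (∑ n ∈ Finset.range N, l⁻¹ ^ (n + 1) • T ^ n)
      + l⁻¹ ^ N • T ^ N - l⁻¹ ^ N • (T ^ N * (1 - T) * R) := by
    conv_lhs => rw [hexp N]
    rw [smul_add, smul_comm (l - 1) (l⁻¹ ^ N), ← mul_smul_comm (l - 1), hR1, mul_sub, smul_sub,
      mul_one, mul_assoc]
    abel
  have hs : ‖∑ n ∈ Finset.range N, l⁻¹ ^ (n + 1) • T ^ n‖ ≤ N * C₁ := by
    calc _ ≤ ∑ n ∈ Finset.range N, C₁ := by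
          refine norm_sum_le_of_le _ fun n _ => ?_
          rw [norm_smul]
          calc _ ≤ 1 * C₁ := by gcongr; exacts [hli _, h1 n]
            _ = C₁ := one_mul _
      _ = N * C₁ := by simp
  have hT : ((N : ℝ) + 1) * ‖T ^ N * (1 - T)‖ ≤ C₂ := by
    have h := h2 (N + 1) (by omega)
    rw [norm_smul, Complex.norm_natCast, Nat.add_sub_cancel] at h
    exact_mod_cast h
  -- the term to be absorbed into the left-hand side
  have hT2 : ‖T ^ N * (1 - T)‖ ≤ ‖l - 1‖ / 2 := by
    have : ((N : ℝ) + 1) * ‖T ^ N * (1 - T)‖ ≤ (N + 1) * (‖l - 1‖ / 2) := by linarith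
    exact le_of_mul_le_mul_left this (by positivity)
  have hA : ‖(l - 1) • (∑ n ∈ Finset.range N, l⁻¹ ^ (n + 1) • T ^ n)‖ ≤ 2 * C₂ * C₁ := by
    rw [norm_smul]
    calc _ ≤ ‖l - 1‖ * (N * C₁) := by gcongr
      _ = (N * ‖l - 1‖) * C₁ := by ring
      _ ≤ _ := by gcongr
  have hB : ‖l⁻¹ ^ N • T ^ N‖ ≤ C₁ := by
    rw [norm_smul]
    calc _ ≤ 1 * C₁ := by gcongr; exacts [hli _, h1 N]
      _ = C₁ := one_mul _
  have hC : ‖l⁻¹ ^ N • (T ^ N * (1 - T) * R)‖ ≤ ‖(l - 1) • R‖ / 2 := by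
    rw [norm_smul, norm_smul]
    calc _ ≤ 1 * (‖l - 1‖ / 2 * ‖R‖) := by
          gcongr
          · exact hli _
          · exact (norm_mul_le _ _).trans (by gcongr)
      _ = _ := by ring
  have hfin : ‖(l - 1) • R‖ ≤ 2 * C₂ * C₁ + C₁ + ‖(l - 1) • R‖ / 2 := by
    conv_lhs => rw [hkey]
    exact (norm_sub_le _ _).trans (add_le_add ((norm_add_le _ _).trans (add_le_add hA hB)) hC)
  linarith

end BanachAlgebra

/-- Characterisation of Ritt operators: `T` is Ritt (i.e. every `|λ| > 1` lies in its
resolvent set and `sup_{|λ|>1} ‖(λ−1)(λ−T)⁻¹‖ < ∞`) iff `T` is power-bounded (PB) and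
satisfies the discrete derivative condition (DD): `sup_{k ≥ 1} ‖k·T^{k−1}(Id−T)‖ < ∞`. -/
theorem stmt_5 {X : Type*} [NormedAddCommGroup X] [NormedSpace ℂ X] [CompleteSpace X]
    [Nontrivial X] (T : X →L[ℂ] X) :
    ((∀ l : ℂ, 1 < ‖l‖ → l ∈ resolventSet ℂ T) ∧
      ∃ K : ℝ, ∀ l : ℂ, 1 < ‖l‖ → ‖(l - 1) • resolvent T l‖ ≤ K) ↔
    ((∃ C₁ : ℝ, 0 < C₁ ∧ ∀ n : ℕ, ‖T ^ n‖ ≤ C₁) ∧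
      ∃ C₂ : ℝ, 0 < C₂ ∧ ∀ k : ℕ, 1 ≤ k → ‖(k : ℂ) • (T ^ (k - 1) * (1 - T))‖ ≤ C₂) := by
  constructor
  · rintro ⟨hres, K, hK⟩
    exact ritt_forward T hres hK
  · rintro ⟨⟨C₁, hC₁, h1⟩, C₂, hC₂, h2⟩
    exact ⟨fun l hl => mem_resolventSet_of_powerBounded T h1 hl, _,
      fun l hl => ritt_backward T hC₁ h1 hC₂ h2 hl⟩
end
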